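/- arXiv:math/0205055 — 3 statements merged into one kernel-verified Lean document; each statement's English description precedes it below -/
import Mathlib

section
/- For nonnegative integers i, j, the q-series identity ∑_{a+ab=i, b+ab=j} q^{T_{a+b+ab} + T_{ab}} / ((q)_a (q)_b (q)_{ab}) = q^{T_i + T_j} / ((q)_i (q)_j) holds as an identity of formal power series in q, where the sum is over nonnegative integers a, b, ab satisfying the two constraints. -/
open PowerSeries Finset

/-- Triangular number `T n = n(n+1)/2`. -/
def tri (n : ℕ) : ℕ := n * (n + 1) / 2

/-- The `q`-Pochhammer symbol `(q)_n = ∏_{j=1}^n (1 - q^j)` as a formal power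
series in `q` over `ℚ`. -/
noncomputable def qPoch (n : ℕ) : PowerSeries ℚ :=
  ∏ j ∈ Finset.range n, (1 - (PowerSeries.X : PowerSeries ℚ) ^ (j + 1))

theorem two_tri (n : ℕ) : 2 * tri n = n * (n + 1) := by
  unfold tri
  exact Nat.mul_div_cancel' (Nat.even_mul_succ_self n).two_dvd

theorem tri_split (a b c : ℕ) :
    tri (a + b + c) + tri c = tri (a + c) + tri (b + c) + a * b := by
  have h1 := two_tri (a + b + c)
  have h2 := two_tri c
  have h3 := two_tri (a + c)
  have h4 := two_tri (b + c)
  nlinarith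

theorem qPoch_const (n : ℕ) : constantCoeff (qPoch n) = 1 := by
  simp [qPoch, map_prod]

/-- The inverse `1 / (q)_n`. -/
noncomputable def qInv (n : ℕ) : PowerSeries ℚ := (qPoch n)⁻¹

theorem qInv_zero : qInv 0 = 1 := by
  simp [qInv, qPoch]

theorem qInv_succ (n : ℕ) :
    (1 - (X : PowerSeries ℚ) ^ (n + 1)) * qInv (n + 1) = qInv n := by
  have h0 : qPoch (n + 1) = qPoch n * (1 - (X : PowerSeries ℚ) ^ (n + 1)) := by
    simp [qPoch, Finset.prod_range_succ]
  have h1 : qPoch (n + 1) * qInv (n + 1) = 1 :=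
    PowerSeries.mul_inv_cancel _ (by simp [qPoch_const])
  have h2 : qPoch n * qInv n = 1 :=
    PowerSeries.mul_inv_cancel _ (by simp [qPoch_const])
  rw [h0] at h1
  linear_combination qInv n * h1 - (1 - (X : PowerSeries ℚ) ^ (n + 1)) * qInv (n + 1) * h2

/-- The summand. -/
noncomputable def fTerm (i j c : ℕ) : PowerSeries ℚ :=
  if c ≤ i ∧ c ≤ j then
    X ^ ((i - c) * (j - c)) * (qInv (i - c) * qInv (j - c) * qInv c) else 0

theorem fTerm_A (i j c : ℕ) (hc : c ≤ i + 1) :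
    (1 - (X : PowerSeries ℚ) ^ (i + 1 - c)) * fTerm (i + 1) j c
      = X ^ (j - c) * fTerm i j c := by
  by_cases hj : c ≤ j
  · rcases Nat.lt_or_ge i c with h | h
    · obtain rfl : c = i + 1 := by omega
      simp [fTerm]
    · obtain ⟨u, rfl⟩ := Nat.exists_eq_add_of_le h
      obtain ⟨v, rfl⟩ := Nat.exists_eq_add_of_le hj
      have e : c + u + 1 - c = u + 1 := by omega
      have h1 : c ≤ c + u + 1 := by omega
      simp only [fTerm, e, h1, Nat.le_add_right, and_self, if_true, Nat.add_sub_cancel_left]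
      rw [← qInv_succ u]
      ring
  · simp [fTerm, hj]

theorem fTerm_B (i j c : ℕ) (hc : c ≤ i) :
    (X : PowerSeries ℚ) ^ (i - c) * (1 - X ^ (c + 1)) * fTerm (i + 1) j (c + 1)
      = (1 - X ^ (j - c)) * fTerm i j c := by
  obtain ⟨u, rfl⟩ := Nat.exists_eq_add_of_le hc
  rcases Nat.lt_or_ge c j with h | h
  · obtain ⟨v, rfl⟩ := Nat.exists_eq_add_of_le (Nat.succ_le_of_lt h)
    have e1 : c + u + 1 - (c + 1) = u := by omega
    have e2 : c.succ + v - c = v + 1 := by omega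
    have e3 : c.succ + v - (c + 1) = v := by omega
    have h1 : c + 1 ≤ c + u + 1 ∧ c + 1 ≤ c.succ + v := by omega
    have h2 : c ≤ c + u ∧ c ≤ c.succ + v := by omega
    rw [fTerm, fTerm, if_pos h1, if_pos h2, e1, e2, e3, Nat.add_sub_cancel_left]
    rw [← qInv_succ v, ← qInv_succ c]
    ring
  · have h1 : ¬ (c + 1 ≤ j) := by omega
    have h2 : j - c = 0 := by omega
    simp [fTerm, h1, h2]

theorem fSum_succ (i j : ℕ) :
    (1 - (X : PowerSeries ℚ) ^ (i + 1)) * ∑ c ∈ range (i + 2), fTerm (i + 1) j c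
      = ∑ c ∈ range (i + 1), fTerm i j c := by
  have hsplit : (1 - (X : PowerSeries ℚ) ^ (i + 1)) * ∑ c ∈ range (i + 2), fTerm (i + 1) j c
      = ∑ c ∈ range (i + 2), X ^ (j - c) * fTerm i j c
        + ∑ c ∈ range (i + 2), X ^ (i + 1 - c) * (1 - X ^ c) * fTerm (i + 1) j c := by
    rw [Finset.mul_sum, ← Finset.sum_add_distrib]
    refine Finset.sum_congr rfl fun c hc => ?_
    have hc' : c ≤ i + 1 := by have := Finset.mem_range.1 hc; omega
    rw [← fTerm_A i j c hc']
    have : (X : PowerSeries ℚ) ^ (i + 1) = X ^ (i + 1 - c) * X ^ c := by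
      rw [← pow_add]; congr 1; omega
    rw [this]; ring
  rw [hsplit, Finset.sum_range_succ, Finset.sum_range_succ' _ (i + 1)]
  have hz : fTerm i j (i + 1) = 0 := by simp [fTerm]
  rw [hz]
  simp only [pow_zero, sub_self, mul_zero, zero_mul, add_zero]
  rw [← Finset.sum_add_distrib]
  refine Finset.sum_congr rfl fun c hc => ?_
  have hc' : c ≤ i := by have := Finset.mem_range.1 hc; omega
  have e : i + 1 - (c + 1) = i - c := by omega
  rw [e, fTerm_B i j c hc']
  ring

theorem fSum_eq (i j : ℕ) : ∑ c ∈ range (i + 1), fTerm i j c = qInv i * qInv j := by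
  induction i with
  | zero => simp [fTerm, qInv_zero]
  | succ i ih =>
    have h := fSum_succ i j
    rw [ih, ← qInv_succ i, mul_assoc] at h
    refine mul_left_cancel₀ ?_ h
    intro h0
    have := congrArg (constantCoeff (R := ℚ)) h0
    simp at this

/-- For nonnegative integers `i, j`:
`∑_{a+ab=i, b+ab=j} q^{T_{a+b+ab}+T_{ab}} / ((q)_a (q)_b (q)_{ab})
  = q^{T_i+T_j} / ((q)_i (q)_j)` as formal power series in `q`. -/
theorem alladi_gordon_key_identity (i j : ℕ) :
    ∑ t ∈ (Finset.range (i + 1) ×ˢ Finset.range (j + 1) ×ˢ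
        Finset.range (i + 1)).filter
        (fun t : ℕ × ℕ × ℕ => t.1 + t.2.2 = i ∧ t.2.1 + t.2.2 = j),
      (PowerSeries.X : PowerSeries ℚ) ^ (tri (t.1 + t.2.1 + t.2.2) + tri t.2.2) *
        (qPoch t.1 * qPoch t.2.1 * qPoch t.2.2)⁻¹
    = (PowerSeries.X : PowerSeries ℚ) ^ (tri i + tri j) * (qPoch i * qPoch j)⁻¹ := by
  have key : ∀ a b : PowerSeries ℚ, (a * b)⁻¹ = a⁻¹ * b⁻¹ := fun a b => by
    rw [PowerSeries.mul_inv_rev, mul_comm]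
  simp only [key]
  change _ = X ^ (tri i + tri j) * (qInv i * qInv j)
  rw [← fSum_eq, Finset.mul_sum]
  simp only [fTerm, mul_ite, mul_zero]
  rw [← Finset.sum_filter]
  refine Finset.sum_nbij' (fun t => t.2.2) (fun c => (i - c, j - c, c)) ?_ ?_ ?_ ?_ ?_
  · rintro ⟨a, b, c⟩ h
    simp only [mem_filter, mem_product, mem_range] at h ⊢
    omega
  · intro c h
    simp only [mem_filter, mem_product, mem_range] at h ⊢
    omega
  · rintro ⟨a, b, c⟩ h
    simp only [mem_filter, mem_product, mem_range] at h
    simp only [Prod.mk.injEq, and_true]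
    omega
  · intro c _
    rfl
  · rintro ⟨a, b, c⟩ h
    simp only [mem_filter, mem_product, mem_range] at h
    obtain ⟨_, rfl, rfl⟩ := h
    simp only [Nat.add_sub_cancel, tri_split, qInv]
    rw [pow_add, mul_assoc]
end

section
/- As formal power series in q and A, B: ∑_{a,b,ab ≥ 0} A^{a+ab} B^{b+ab} q^{T_{a+b+ab} + T_{ab}} / ((q)_a (q)_b (q)_{ab}) = ∏_{n≥1}(1 + A q^n) · ∏_{n≥1}(1 + B q^n). -/
open Finset

lemma tri_succ (n : ℕ) : tri (n + 1) = tri n + (n + 1) := by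
  unfold tri
  have : (n + 1) * (n + 1 + 1) = n * (n + 1) + 2 * (n + 1) := by ring
  rw [this]; omega

lemma tri_add (a b : ℕ) : tri (a + b) = tri a + tri b + a * b := by
  induction b with
  | zero => simp [tri]
  | succ b ih => rw [← add_assoc, tri_succ, ih, tri_succ]; ring

/-- The finite q-Pochhammer symbol `(q)_n`. -/
noncomputable def qP (q : ℂ) (n : ℕ) : ℂ := ∏ j ∈ Finset.range n, (1 - q ^ (j + 1))

lemma qP_zero (q : ℂ) : qP q 0 = 1 := by simp [qP]

lemma qP_succ (q : ℂ) (n : ℕ) : qP q (n + 1) = qP q n * (1 - q ^ (n + 1)) := by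
  simp [qP, Finset.prod_range_succ]

lemma one_sub_ne (q : ℂ) (hq : ‖q‖ < 1) (n : ℕ) : 1 - q ^ (n + 1) ≠ 0 := by
  intro h
  have h1 : q ^ (n + 1) = 1 := (sub_eq_zero.mp h).symm
  have h2 : ‖q‖ ^ (n + 1) < 1 := pow_lt_one₀ (norm_nonneg _) hq (by omega)
  rw [← norm_pow, h1] at h2
  simp at h2

lemma qP_ne (q : ℂ) (hq : ‖q‖ < 1) (n : ℕ) : qP q n ≠ 0 :=
  Finset.prod_ne_zero_iff.mpr fun j _ => one_sub_ne q hq j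

/-- Weights of the absorption process: `n` steps, started at `m`, with `c` decrements. -/
noncomputable def wt (q : ℂ) : ℕ → ℕ → ℕ → ℂ
  | 0, _, 0 => 1
  | 0, _, _ + 1 => 0
  | n + 1, m, 0 => q ^ m * wt q n m 0
  | n + 1, m, c + 1 => q ^ m * wt q n m (c + 1) + (1 - q ^ m) * wt q n (m - 1) c

lemma wt_zero_of_lt (q : ℂ) (n : ℕ) : ∀ m c, n < c → wt q n m c = 0 := by
  induction n with
  | zero =>
    intro m c h
    obtain ⟨c, rfl⟩ : ∃ d, c = d + 1 := ⟨c - 1, by omega⟩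
    simp [wt]
  | succ n ih =>
    intro m c h
    obtain ⟨c, rfl⟩ : ∃ d, c = d + 1 := ⟨c - 1, by omega⟩
    simp [wt, ih m (c + 1) (by omega), ih (m - 1) c (by omega)]

lemma wt_zero_of_lt' (q : ℂ) (n : ℕ) : ∀ m c, m < c → wt q n m c = 0 := by
  induction n with
  | zero =>
    intro m c h
    obtain ⟨c, rfl⟩ : ∃ d, c = d + 1 := ⟨c - 1, by omega⟩
    simp [wt]
  | succ n ih =>
    intro m c h
    obtain ⟨c, rfl⟩ : ∃ d, c = d + 1 := ⟨c - 1, by omega⟩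
    rcases m with _ | m
    · simp [wt, ih 0 (c + 1) (by omega)]
    · simp [wt, ih (m + 1) (c + 1) (by omega), ih m c (by omega)]

lemma wt_sum (q : ℂ) (n : ℕ) : ∀ m, ∑ c ∈ Finset.range (n + 1), wt q n m c = 1 := by
  induction n with
  | zero => intro m; simp [wt]
  | succ n ih =>
    intro m
    rw [Finset.sum_range_succ']
    simp only [wt, Finset.sum_add_distrib, ← Finset.mul_sum, ih]
    have h := Finset.sum_range_succ' (fun c => wt q n m c) (n + 1)
    rw [Finset.sum_range_succ, ih, wt_zero_of_lt q n m (n + 1) (by omega)] at h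
    linear_combination (-q ^ m) * h

lemma wt_closed (q : ℂ) (n : ℕ) : ∀ a b c, b + c = n →
    wt q n (a + c) c * (qP q a * qP q b * qP q c) = q ^ (a * b) * qP q n * qP q (a + c) := by
  induction n with
  | zero =>
    intro a b c h
    obtain ⟨rfl, rfl⟩ : b = 0 ∧ c = 0 := by omega
    simp [wt, qP_zero]
  | succ n ih =>
    intro a b c h
    rcases c with _ | c
    · obtain rfl : b = n + 1 := by omega
      have h1 := ih a n 0 rfl
      simp only [add_zero, qP_zero, wt, qP_succ] at h1 ⊢
      rw [mul_add, pow_add]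
      linear_combination (q ^ a * (1 - q ^ (n + 1))) * h1
    · have h2 := ih a b c (by omega)
      rcases b with _ | b
      · obtain rfl : c = n := by omega
        simp only [wt, wt_zero_of_lt q c _ (c + 1) (by omega), ← add_assoc,
          Nat.add_sub_cancel, qP_succ, qP_zero] at h2 ⊢
        linear_combination (1 - q ^ (a + c + 1)) * (1 - q ^ (c + 1)) * h2
      · have h1 := ih a b (c + 1) (by omega)
        obtain rfl : n = b + 1 + c := by omega
        simp only [wt, ← add_assoc, Nat.add_sub_cancel, qP_succ] at h1 h2 ⊢
        linear_combination (q ^ (a + c + 1) * (1 - q ^ (b + 1))) * h1 +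
          (1 - q ^ (a + c + 1)) * (1 - q ^ (c + 1)) * h2

/-- Terms of Euler's series. -/
noncomputable def eu (q A : ℂ) (n : ℕ) : ℂ := A ^ n * q ^ tri n / qP q n

lemma eu_succ (q A : ℂ) (n : ℕ) :
    eu q A (n + 1) = A * q ^ (n + 1) / (1 - q ^ (n + 1)) * eu q A n := by
  simp only [eu, qP_succ, tri_succ]
  rw [div_mul_div_comm, pow_add q (tri n)]
  congr 1 <;> ring

lemma eu_summable (q A : ℂ) (hq : ‖q‖ < 1) : Summable (fun n => ‖eu q A n‖) := by
  have hp : Filter.Tendsto (fun n : ℕ => q ^ (n + 1)) Filter.atTop (nhds 0) :=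
    (tendsto_pow_atTop_nhds_zero_of_norm_lt_one hq).comp (Filter.tendsto_add_atTop_nat 1)
  have ht : Filter.Tendsto (fun n : ℕ => ‖A * q ^ (n + 1) / (1 - q ^ (n + 1))‖)
      Filter.atTop (nhds 0) := by
    have := ((hp.const_mul A).div (hp.const_sub 1) (by simp)).norm
    simpa using this
  have he : ∀ᶠ n : ℕ in Filter.atTop, ‖A * q ^ (n + 1) / (1 - q ^ (n + 1))‖ ≤ 1 / 2 :=
    ht.eventually_le_const (by norm_num)
  refine summable_of_ratio_norm_eventually_le (r := 1 / 2) (by norm_num) ?_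
  filter_upwards [he] with n hn
  rw [eu_succ, norm_norm, norm_norm, norm_mul]
  gcongr

lemma eu_shift (q A : ℂ) (n : ℕ) : eu q (A * q) n = q ^ n * eu q A n := by
  simp only [eu]; rw [mul_pow]; ring

lemma euler_step (q A : ℂ) (hq : ‖q‖ < 1) :
    ∑' n, eu q A n = (1 + A * q) * ∑' n, eu q (A * q) n := by
  have s1 := (eu_summable q A hq).of_norm
  have s2 := (eu_summable q (A * q) hq).of_norm
  have h : ∑' n, (eu q A n - eu q (A * q) n) = A * q * ∑' n, eu q (A * q) n := by
    rw [(s1.sub s2).tsum_eq_zero_add, ← tsum_mul_left]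
    have h0 : eu q A 0 - eu q (A * q) 0 = 0 := by simp [eu]
    rw [h0, zero_add]
    congr 1; ext n
    rw [eu_shift, eu_shift, eu_succ]
    have := one_sub_ne q hq n
    field_simp
    ring
  rw [s1.tsum_sub s2] at h
  linear_combination h

lemma euler_iter (q A : ℂ) (hq : ‖q‖ < 1) (N : ℕ) :
    ∑' n, eu q A n = (∏ j ∈ Finset.range N, (1 + A * q ^ (j + 1))) *
      ∑' n, eu q (A * q ^ N) n := by
  induction N with
  | zero => simp
  | succ N ih =>
    rw [ih, Finset.prod_range_succ, euler_step q (A * q ^ N) hq]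
    simp only [pow_succ, mul_assoc]

lemma euler (q A : ℂ) (hq : ‖q‖ < 1) :
    ∑' n, eu q A n = ∏' n : ℕ, (1 + A * q ^ (n + 1)) := by
  have hp : Filter.Tendsto (fun n : ℕ => q ^ n) Filter.atTop (nhds 0) :=
    tendsto_pow_atTop_nhds_zero_of_norm_lt_one hq
  have hE : Filter.Tendsto (fun N : ℕ => ∑' n, eu q (A * q ^ N) n) Filter.atTop
      (nhds (∑' n, eu q 0 n)) := by
    refine tendsto_tsum_of_dominated_convergence (eu_summable q A hq) ?_ ?_
    · intro n
      have hc : Continuous (fun x : ℂ => eu q x n) := by unfold eu; fun_prop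
      have := (hc.tendsto 0).comp (g := fun x : ℂ => eu q x n)
        (f := fun N : ℕ => A * q ^ N) (by simpa using hp.const_mul A)
      exact this
    · filter_upwards with N n
      have : eu q (A * q ^ N) n = (q ^ N) ^ n * eu q A n := by
        simp only [eu]; rw [mul_pow]; ring
      rw [this, norm_mul, norm_pow, norm_pow]
      exact mul_le_of_le_one_left (norm_nonneg _)
        (pow_le_one₀ (by positivity) (pow_le_one₀ (norm_nonneg _) hq.le))
  have h0 : ∑' n, eu q 0 n = 1 := by
    rw [tsum_eq_single 0]
    · simp [eu, tri, qP_zero]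
    · intro n hn; simp [eu, hn]
  have hs : Summable (fun n : ℕ => ‖A * q ^ (n + 1)‖) := by
    have := ((summable_geometric_of_lt_one (norm_nonneg q) hq).mul_left (‖A‖ * ‖q‖))
    refine this.congr fun n => ?_
    rw [norm_mul, norm_pow]; ring
  have hm := (multipliable_one_add_of_summable hs).hasProd.tendsto_prod_nat
  have := hm.mul hE
  rw [h0, mul_one] at this
  refine tendsto_nhds_unique ?_ this
  simp_rw [← euler_iter q A hq]
  exact tendsto_const_nhds

lemma term_eq (q A B : ℂ) (hq : ‖q‖ < 1) (a b c : ℕ) :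
    A ^ (a + c) * B ^ (b + c) * q ^ (tri (a + b + c) + tri c) /
      (qP q a * qP q b * qP q c) =
    eu q A (a + c) * eu q B (b + c) * wt q (b + c) (a + c) c := by
  have h := wt_closed q (b + c) a b c rfl
  have e : tri (a + b + c) + tri c = tri (a + c) + tri (b + c) + a * b := by
    simp only [tri_add]; ring
  have := qP_ne q hq a
  have := qP_ne q hq b
  have := qP_ne q hq c
  have := qP_ne q hq (a + c)
  have := qP_ne q hq (b + c)
  rw [e, pow_add, pow_add, eu, eu]
  field_simp
  linear_combination (-(A ^ (a + c) * B ^ (b + c) * q ^ tri (a + c) * q ^ tri (b + c))) * h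

lemma term_summable (q A B : ℂ) (hq : ‖q‖ < 1) :
    Summable (fun t : ℕ × ℕ × ℕ => A ^ (t.1 + t.2.2) * B ^ (t.2.1 + t.2.2) *
        q ^ (tri (t.1 + t.2.1 + t.2.2) + tri t.2.2) /
        (qP q t.1 * qP q t.2.1 * qP q t.2.2)) := by
  have hs := (eu_summable q A hq).mul_of_nonneg
    ((eu_summable q B hq).mul_of_nonneg (eu_summable q (A * B) hq)
      (fun _ => norm_nonneg _) (fun _ => norm_nonneg _))
    (fun _ => norm_nonneg _) (fun _ => by simp only [Pi.zero_apply]; positivity)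
  refine Summable.of_norm_bounded hs ?_
  rintro ⟨a, b, c⟩
  have e : tri (a + b + c) + tri c = (a * b + (a + b) * c + tri c) + (tri a + tri b + tri c) := by
    simp only [tri_add]; ring
  have e2 : A ^ (a + c) * B ^ (b + c) * q ^ (tri (a + b + c) + tri c) /
        (qP q a * qP q b * qP q c) = q ^ (a * b + (a + b) * c + tri c) *
        (eu q A a * (eu q B b * eu q (A * B) c)) := by
    rw [e]; simp only [eu, pow_add, mul_pow, div_eq_mul_inv, mul_inv]; ring
  simp only
  rw [e2, norm_mul, norm_pow, norm_mul (eu q A a), norm_mul (eu q B b)]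
  exact mul_le_of_le_one_left (by positivity) (pow_le_one₀ (norm_nonneg _) hq.le)

/-- The two parameter key identity for Schur's theorem:
`∑_{a,b,ab ≥ 0} A^{a+ab} B^{b+ab} q^{T_{a+b+ab}+T_{ab}} / ((q)_a (q)_b (q)_{ab})
  = ∏_{n≥1} (1 + A q^n) ∏_{n≥1} (1 + B q^n)`, for `|q| < 1`. -/
theorem schur_key_identity (q A B : ℂ) (hq : ‖q‖ < 1) :
    ∑' t : ℕ × ℕ × ℕ,
      A ^ (t.1 + t.2.2) * B ^ (t.2.1 + t.2.2) *
        q ^ (tri (t.1 + t.2.1 + t.2.2) + tri t.2.2) /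
        ((∏ j ∈ Finset.range t.1, (1 - q ^ (j + 1))) *
         (∏ j ∈ Finset.range t.2.1, (1 - q ^ (j + 1))) *
         (∏ j ∈ Finset.range t.2.2, (1 - q ^ (j + 1))))
    = (∏' n : ℕ, (1 + A * q ^ (n + 1))) * ∏' n : ℕ, (1 + B * q ^ (n + 1)) := by
  have e1 : ∀ t : ℕ × ℕ × ℕ, A ^ (t.1 + t.2.2) * B ^ (t.2.1 + t.2.2) *
        q ^ (tri (t.1 + t.2.1 + t.2.2) + tri t.2.2) /
        ((∏ j ∈ Finset.range t.1, (1 - q ^ (j + 1))) *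
         (∏ j ∈ Finset.range t.2.1, (1 - q ^ (j + 1))) *
         (∏ j ∈ Finset.range t.2.2, (1 - q ^ (j + 1)))) =
      (fun s : (ℕ × ℕ) × ℕ => eu q A s.1.1 * eu q B s.1.2 * wt q s.1.2 s.1.1 s.2)
        ((fun t : ℕ × ℕ × ℕ => ((t.1 + t.2.2, t.2.1 + t.2.2), t.2.2)) t) :=
    fun t => term_eq q A B hq t.1 t.2.1 t.2.2
  have hsum := term_summable q A B hq
  have hsum := hsum.congr (fun t => e1 t)
  rw [tsum_congr e1]
  have hinj : Function.Injective
      (fun t : ℕ × ℕ × ℕ => ((t.1 + t.2.2, t.2.1 + t.2.2), t.2.2)) := by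
    rintro ⟨a, b, c⟩ ⟨a', b', c'⟩ h
    simp only [Prod.mk.injEq] at h ⊢
    omega
  have hz : ∀ s : (ℕ × ℕ) × ℕ,
      s ∉ Set.range (fun t : ℕ × ℕ × ℕ => ((t.1 + t.2.2, t.2.1 + t.2.2), t.2.2)) →
      (fun s : (ℕ × ℕ) × ℕ => eu q A s.1.1 * eu q B s.1.2 * wt q s.1.2 s.1.1 s.2) s = 0 := by
    rintro ⟨⟨m, n⟩, c⟩ h
    have : m < c ∨ n < c := by
      by_contra hc
      push Not at hc
      refine h ⟨(m - c, n - c, c), ?_⟩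
      simp [Nat.sub_add_cancel hc.1, Nat.sub_add_cancel hc.2]
    rcases this with h1 | h1
    · simp [wt_zero_of_lt' q n m c h1]
    · simp [wt_zero_of_lt q n m c h1]
  have hsum2 := (hinj.summable_iff hz).mp hsum
  rw [hinj.tsum_eq (f := fun s : (ℕ × ℕ) × ℕ =>
      eu q A s.1.1 * eu q B s.1.2 * wt q s.1.2 s.1.1 s.2)
    (fun s hs => by by_contra hc; exact hs (hz s hc)), hsum2.tsum_prod]
  rw [← euler q A hq, ← euler q B hq,
    tsum_mul_tsum_of_summable_norm (eu_summable q A hq) (eu_summable q B hq)]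
  refine tsum_congr fun p => ?_
  simp only
  rw [tsum_mul_left, tsum_eq_sum (s := Finset.range (p.2 + 1)), wt_sum, mul_one]
  intro c hc
  exact wt_zero_of_lt q _ _ _ (by simpa using hc)
end

section
/- The number of partitions of n into distinct parts congruent to 2, 4, or 5 mod 6 equals the number of partitions of n into parts, none equal to 1 or 3, with minimal difference 6 between parts, where difference exactly 6 is allowed only if the larger part is congruent to 2, 4, or 5 mod 6. -/
open Nat

namespace GollnitzProof

/-- State of the transfer recurrence. -/
structure St (R : Type*) where
  ab : R
  h : R
  b : R
  g : R
  gp : R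

section Algebra

variable {R : Type*} [CommRing R]

/-- The generating polynomials of the difference-condition partitions, by largest part. -/
def st (A B C q : R) : ℕ → St R
  | 0 => ⟨1, 1 + A, 1 + A + B, 1 + A + B + C, 1⟩
  | n + 1 =>
    let s := st A B C q n
    let ab' := s.g + A * B * q ^ n * s.gp
    let h' := ab' + A * C * q ^ n * s.ab + A * q ^ (n + 1) * s.h
    let b' := h' + B * C * q ^ n * s.h + B * q ^ (n + 1) * s.b
    let g' := b' + C * q ^ (n + 1) * s.g
    ⟨ab', h', b', g', s.g⟩

def G (A B C q : R) (n : ℕ) : R := (st A B C q n).gp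
def H (A B C q : R) (n : ℕ) : R := (st A B C q n).h

variable (A B C q : R)

lemma st_g (n : ℕ) : (st A B C q n).g = G A B C q (n + 1) := rfl

lemma st_b (n : ℕ) : (st A B C q n).b = G A B C q (n + 1) - C * q ^ n * G A B C q n := by
  cases n with
  | zero => simp [G, st]
  | succ n => simp [G, st]

lemma st_ab (n : ℕ) : (st A B C q (n + 1)).ab
    = G A B C q (n + 1) + A * B * q ^ n * G A B C q n := rfl

lemma E1 (n : ℕ) : G A B C q (n + 2) - C * q ^ (n + 1) * G A B C q (n + 1)
    - B * q ^ (n + 1) * (G A B C q (n + 1) - C * q ^ n * G A B C q n)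
    = H A B C q (n + 1) + B * C * q ^ n * H A B C q n := by
  have h1 : (st A B C q (n + 1)).b = H A B C q (n + 1) + B * C * q ^ n * H A B C q n
    + B * q ^ (n + 1) * (st A B C q n).b := rfl
  rw [st_b, st_b] at h1
  linear_combination h1

lemma E2 (n : ℕ) : H A B C q (n + 2) - A * q ^ (n + 2) * H A B C q (n + 1)
    = G A B C q (n + 2) + (A * B + A * C) * q ^ (n + 1) * G A B C q (n + 1)
      + A ^ 2 * B * C * q ^ (2 * n + 1) * G A B C q n := by
  have h1 : H A B C q (n + 2) = (st A B C q (n + 2)).ab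
    + A * C * q ^ (n + 1) * (st A B C q (n + 1)).ab
    + A * q ^ (n + 2) * H A B C q (n + 1) := rfl
  rw [st_ab, st_ab] at h1
  linear_combination h1

lemma rec4 (n : ℕ) : G A B C q (n + 4) =
    (1 + (A + B + C) * q ^ (n + 3)) * G A B C q (n + 3)
    + (A * B + B * C + A * C) * q ^ (n + 2) * (1 - q ^ (n + 3)) * G A B C q (n + 2)
    + (A * B * C * q ^ (3 * n + 6)
      + (A + B + C) * (A * B * C) * q ^ (2 * n + 3)) * G A B C q (n + 1)
    + (A * B * C) ^ 2 * q ^ (3 * n + 3) * G A B C q n := by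
  linear_combination E1 A B C q (n + 2) - A * q ^ (n + 3) * E1 A B C q (n + 1)
    + E2 A B C q (n + 1) + B * C * q ^ (n + 2) * E2 A B C q n

lemma rec4H (n : ℕ) : H A B C q (n + 4) =
    (1 + (A * q + B + C) * q ^ (n + 3)) * H A B C q (n + 3)
    + (A * q * B + B * C + A * q * C) * q ^ (n + 2) * (1 - q ^ (n + 3)) * H A B C q (n + 2)
    + (A * q * B * C * q ^ (3 * n + 6)
      + (A * q + B + C) * (A * q * B * C) * q ^ (2 * n + 3)) * H A B C q (n + 1)
    + (A * q * B * C) ^ 2 * q ^ (3 * n + 3) * H A B C q n := by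
  linear_combination E2 A B C q (n + 2) - (B + C) * q ^ (n + 3) * E2 A B C q (n + 1)
    + B * C * q ^ (2 * n + 5) * E2 A B C q n
    + E1 A B C q (n + 2) + (A * B + A * C) * q ^ (n + 3) * E1 A B C q (n + 1)
    + A ^ 2 * B * C * q ^ (2 * n + 5) * E1 A B C q n

lemma shift (n : ℕ) : H A B C q n = (1 + A) * G (A * q) B C q n := by
  induction n using Nat.strong_induction_on with
  | _ n ih =>
    match n with
    | 0 => simp [G, H, st]
    | 1 => simp only [G, H, st]; ring
    | 2 => simp only [G, H, st]; ring
    | 3 => simp only [G, H, st]; ring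
    | n + 4 =>
      rw [rec4H, rec4, ih (n + 3) (by omega), ih (n + 2) (by omega), ih (n + 1) (by omega),
        ih n (by omega)]
      ring

lemma rot (n : ℕ) : G A B C q n = G B C A q n := by
  induction n using Nat.strong_induction_on with
  | _ n ih =>
    match n with
    | 0 => simp [G, st]
    | 1 => simp only [G, st]; ring
    | 2 => simp only [G, st]; ring
    | 3 => simp only [G, st]; ring
    | n + 4 =>
      rw [rec4, rec4 B C A, ih (n + 3) (by omega), ih (n + 2) (by omega), ih (n + 1) (by omega),
        ih n (by omega)]
      ring

lemma G_zero (n : ℕ) : G 0 0 0 q n = 1 := by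
  have : ∀ n, (st 0 0 0 q n).gp = 1 ∧ (st 0 0 0 q n).g = 1 := by
    intro n
    have hb := st_b 0 0 0 q n
    induction n with
    | zero => simp [st]
    | succ n ih =>
      have h1 := (ih (st_b 0 0 0 q n))
      constructor
      · exact h1.2
      · simp [st, h1.2]
  exact (this n).1

variable {q}

lemma qz {M n : ℕ} (hq : q ^ M = 0) (h : M ≤ n) : q ^ n = 0 := pow_eq_zero_of_le h hq

lemma stab {M n : ℕ} (hq : q ^ M = 0) (h : M < n) : H A B C q n = G A B C q n := by
  obtain ⟨n, rfl⟩ : ∃ k, n = k + 1 := ⟨n - 1, by omega⟩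
  simp only [H, G, st, qz hq (show M ≤ n by omega), qz hq (show M ≤ n + 1 by omega)]
  ring

lemma G_prod {M n : ℕ} (hq : q ^ M = 0) (h : M < n) (K : ℕ) :
    G A B C q n = (∏ k ∈ Finset.range K, (1 + A * q ^ k)) * G (A * q ^ K) B C q n := by
  induction K with
  | zero => simp
  | succ K ih =>
    rw [ih, Finset.prod_range_succ, ← stab _ _ _ hq h, shift]
    rw [show A * q ^ K * q = A * q ^ (K + 1) by ring]
    ring

lemma G_prod' {M n : ℕ} (hq : q ^ M = 0) (h : M < n) :
    G A B C q n = (∏ k ∈ Finset.range M, (1 + A * q ^ k)) * G 0 B C q n := by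
  rw [G_prod A B C hq h M, hq, mul_zero]

lemma G_final {M n : ℕ} (hq : q ^ M = 0) (h : M < n) :
    G A B C q n = ∏ k ∈ Finset.range M, ((1 + A * q ^ k) * (1 + B * q ^ k) * (1 + C * q ^ k)) := by
  rw [G_prod' A B C hq h, rot, G_prod' B C 0 hq h, rot, G_prod' C 0 0 hq h, G_zero,
    Finset.prod_mul_distrib, Finset.prod_mul_distrib]
  ring

end Algebra

section Comb

def P (s : Finset ℕ) : Prop :=
  (∀ x ∈ s, x ≠ 0 ∧ x ≠ 1 ∧ x ≠ 3) ∧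
    ∀ x ∈ s, ∀ y ∈ s, x < y → 6 ≤ y - x ∧ (y - x = 6 → y % 6 = 2 ∨ y % 6 = 4 ∨ y % 6 = 5)

open Classical in
noncomputable def S (k : ℕ) : Finset (Finset ℕ) := (Finset.range (k + 1)).powerset.filter P

lemma mem_S {k : ℕ} {s : Finset ℕ} : s ∈ S k ↔ (∀ x ∈ s, x ≤ k) ∧ P s := by
  simp [S, Finset.subset_iff]

variable {R : Type*} [CommRing R] (x : R)

noncomputable def W (k : ℕ) : R := ∑ s ∈ S k, x ^ (∑ i ∈ s, i)

lemma W_zero : W x 0 = 1 := by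
  have : S 0 = {∅} := by
    ext s
    rw [mem_S, Finset.mem_singleton]
    constructor
    · rintro ⟨h, hp⟩
      refine Finset.eq_empty_of_forall_notMem fun y hy => ?_
      exact (hp.1 y hy).1 (Nat.le_zero.1 (h y hy))
    · rintro rfl
      simp [P]
  simp [W, this]

lemma W_split (k : ℕ) : W x (k + 1) = W x k + ∑ s ∈ (S (k + 1)).filter (fun s => k + 1 ∈ s),
    x ^ (∑ i ∈ s, i) := by
  have h : S k = (S (k + 1)).filter (fun s => k + 1 ∉ s) := by
    ext s
    rw [Finset.mem_filter, mem_S, mem_S]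
    constructor
    · rintro ⟨h, hp⟩
      exact ⟨⟨fun y hy => (h y hy).trans (by omega), hp⟩, fun hk => by have := h _ hk; omega⟩
    · rintro ⟨⟨h, hp⟩, hk⟩
      refine ⟨fun y hy => ?_, hp⟩
      have h1 := h y hy
      have : y ≠ k + 1 := fun e => hk (e ▸ hy)
      omega
  rw [W, W, h]
  exact ((add_comm _ _).trans (Finset.sum_filter_add_sum_filter_not _ _ _)).symm

lemma W_skip (k : ℕ) (hk : k + 1 = 1 ∨ k + 1 = 3) : W x (k + 1) = W x k := by
  rw [W_split, Finset.filter_false_of_mem, Finset.sum_empty, add_zero]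
  intro s hs hks
  have := (mem_S.1 hs).2.1 _ hks
  omega

lemma W_gen (k d : ℕ) (h13 : k + 1 ≠ 1 ∧ k + 1 ≠ 3) (hd1 : 1 ≤ d)
    (hd : ∀ y, 1 ≤ y → y ≤ k → ((6 ≤ k + 1 - y ∧ (k + 1 - y = 6 →
      (k + 1) % 6 = 2 ∨ (k + 1) % 6 = 4 ∨ (k + 1) % 6 = 5)) ↔ y ≤ k + 1 - d)) :
    W x (k + 1) = W x k + x ^ (k + 1) * W x (k + 1 - d) := by
  rw [W_split]
  congr 1
  rw [W, Finset.mul_sum]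
  refine Finset.sum_bij' (fun s _ => s.erase (k + 1)) (fun s _ => insert (k + 1) s) ?_ ?_ ?_ ?_ ?_
  · intro s hs
    rw [Finset.mem_filter, mem_S] at hs
    obtain ⟨⟨hle, hp⟩, hk⟩ := hs
    rw [mem_S]
    refine ⟨fun y hy => ?_, fun y hy => hp.1 y (Finset.mem_of_mem_erase hy), fun y hy z hz =>
      hp.2 y (Finset.mem_of_mem_erase hy) z (Finset.mem_of_mem_erase hz)⟩
    have hy' := Finset.mem_of_mem_erase hy
    have hne := Finset.ne_of_mem_erase hy
    have h1 := hle y hy'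
    have h0 := hp.1 y hy'
    exact (hd y (by omega) (by omega)).1 (hp.2 y hy' (k + 1) hk (by omega))
  · intro s hs
    rw [mem_S] at hs
    obtain ⟨hle, hp⟩ := hs
    rw [Finset.mem_filter, mem_S]
    refine ⟨⟨fun y hy => ?_, fun y hy => ?_, fun y hy z hz hyz => ?_⟩, Finset.mem_insert_self _ _⟩
    · rcases Finset.mem_insert.1 hy with rfl | hy
      · exact le_rfl
      · have := hle y hy; omega
    · rcases Finset.mem_insert.1 hy with rfl | hy
      · omega
      · exact hp.1 y hy
    · rcases Finset.mem_insert.1 hy with rfl | hy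
      · rcases Finset.mem_insert.1 hz with rfl | hz
        · omega
        · have := hle z hz; omega
      · rcases Finset.mem_insert.1 hz with rfl | hz
        · have h0 := hp.1 y hy
          have := hle y hy
          exact (hd y (by omega) (by omega)).2 this
        · exact hp.2 y hy z hz hyz
  · intro s hs
    exact Finset.insert_erase (Finset.mem_filter.1 hs).2
  · intro s hs
    refine Finset.erase_insert fun h => ?_
    have := (mem_S.1 hs).1 _ h
    omega
  · intro s hs
    rw [← pow_add, Finset.add_sum_erase _ (fun i => i) (Finset.mem_filter.1 hs).2]

lemma W_prim (k : ℕ) (hk : (k + 1) % 6 = 2 ∨ (k + 1) % 6 = 4 ∨ (k + 1) % 6 = 5) :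
    W x (k + 1) = W x k + x ^ (k + 1) * W x (k + 1 - 6) :=
  W_gen x k 6 (by omega) (by omega) (fun y h1 h2 => by omega)

lemma W_sec (k : ℕ) (h13 : k + 1 ≠ 1 ∧ k + 1 ≠ 3)
    (hk : (k + 1) % 6 = 0 ∨ (k + 1) % 6 = 1 ∨ (k + 1) % 6 = 3) :
    W x (k + 1) = W x k + x ^ (k + 1) * W x (k + 1 - 7) :=
  W_gen x k 7 (by omega) (by omega) (fun y h1 h2 => by omega)

lemma W_st (n : ℕ) : (st (x ^ 2) (x ^ 4) (x ^ 5) (x ^ 6) n) =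
    ⟨W x (6 * n), W x (6 * n + 2), W x (6 * n + 4), W x (6 * n + 5), W x (6 * n - 1)⟩ := by
  induction n with
  | zero =>
    have h1 := W_skip x 0 (by omega)
    have h2 := W_prim x 1 (by omega)
    have h3 := W_skip x 2 (by omega)
    have h4 := W_prim x 3 (by omega)
    have h5 := W_prim x 4 (by omega)
    norm_num [W_zero] at h1 h2 h3 h4 h5
    simp only [st, St.mk.injEq]
    norm_num [h1, h2, h3, h4, h5, W_zero]
  | succ n ih =>
    have e0 := W_sec x (6 * n + 5) (by omega) (by omega)
    have e1 := W_sec x (6 * n + 6) (by omega) (by omega)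
    have e2 := W_prim x (6 * n + 7) (by omega)
    have e3 := W_sec x (6 * n + 8) (by omega) (by omega)
    have e4 := W_prim x (6 * n + 9) (by omega)
    have e5 := W_prim x (6 * n + 10) (by omega)
    rw [show 6 * n + 5 + 1 - 7 = 6 * n - 1 by omega] at e0
    rw [show 6 * n + 6 + 1 - 7 = 6 * n by omega] at e1
    rw [show 6 * n + 7 + 1 - 6 = 6 * n + 2 by omega] at e2
    rw [show 6 * n + 8 + 1 - 7 = 6 * n + 2 by omega] at e3
    rw [show 6 * n + 9 + 1 - 6 = 6 * n + 4 by omega] at e4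
    rw [show 6 * n + 10 + 1 - 6 = 6 * n + 5 by omega] at e5
    simp only [st, ih, St.mk.injEq]
    simp only [show 6 * (n + 1) = 6 * n + 5 + 1 by ring, show 6 * n + 5 + 1 + 2 = 6 * n + 7 + 1 by ring,
      show 6 * n + 5 + 1 + 4 = 6 * n + 9 + 1 by ring, show 6 * n + 5 + 1 + 5 = 6 * n + 10 + 1 by ring,
      show 6 * n + 5 + 1 - 1 = 6 * n + 5 by omega, and_true]
    rw [e5, e4, e3, e2, e1, e0]
    refine ⟨?_, ?_, ?_, ?_⟩ <;> ring

lemma W_eq_prod {M : ℕ} (hx : x ^ (6 * M) = 0) :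
    W x (6 * M + 5) = ∏ k ∈ Finset.range M,
      ((1 + x ^ (6 * k + 2)) * (1 + x ^ (6 * k + 4)) * (1 + x ^ (6 * k + 5))) := by
  have h := G_final (x ^ 2) (x ^ 4) (x ^ 5) (q := x ^ 6) (M := M) (n := M + 1)
    (by rw [← pow_mul, hx]) (by omega)
  rw [G, W_st] at h
  rw [show 6 * M + 5 = 6 * (M + 1) - 1 by omega]
  refine h.trans (Finset.prod_congr rfl fun k _ => ?_)
  ring

/-- Residues allowed in the product side. -/
def Q (i : ℕ) : Prop := i % 6 = 2 ∨ i % 6 = 4 ∨ i % 6 = 5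

instance : DecidablePred Q := fun i => by unfold Q; infer_instance

lemma prod_Q (M : ℕ) : ∏ k ∈ Finset.range M,
      ((1 + x ^ (6 * k + 2)) * (1 + x ^ (6 * k + 4)) * (1 + x ^ (6 * k + 5)))
    = ∑ s ∈ ((Finset.range (6 * M)).filter Q).powerset, x ^ (∑ i ∈ s, i) := by
  have : ∏ k ∈ Finset.range M,
      ((1 + x ^ (6 * k + 2)) * (1 + x ^ (6 * k + 4)) * (1 + x ^ (6 * k + 5)))
      = ∏ i ∈ (Finset.range (6 * M)).filter Q, (1 + x ^ i) := by
    rw [Finset.prod_filter]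
    induction M with
    | zero => simp
    | succ M ih =>
      rw [Finset.prod_range_succ, ih, show 6 * (M + 1) = 6 * M + 1 + 1 + 1 + 1 + 1 + 1 by ring]
      simp only [Finset.prod_range_succ]
      rw [if_neg (show ¬ Q (6 * M) by unfold Q; omega),
        if_neg (show ¬ Q (6 * M + 1) by unfold Q; omega),
        if_pos (show Q (6 * M + 1 + 1) by unfold Q; omega),
        if_neg (show ¬ Q (6 * M + 1 + 1 + 1) by unfold Q; omega),
        if_pos (show Q (6 * M + 1 + 1 + 1 + 1) by unfold Q; omega),
        if_pos (show Q (6 * M + 1 + 1 + 1 + 1 + 1) by unfold Q; omega)]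
      ring
  rw [this, Finset.prod_one_add]
  exact Finset.sum_congr rfl fun s _ => Finset.prod_pow_eq_pow_sum _ _ _

end Comb

open Classical in
lemma count_eq (n M : ℕ) (hn : n < 6 * M) :
    ((((Finset.range (6 * M)).filter Q).powerset).filter (fun s => ∑ i ∈ s, i = n)).card
    = ((S (6 * M + 5)).filter (fun s => ∑ i ∈ s, i = n)).card := by
  let I : Ideal (PowerSeries ℤ) := Ideal.span {PowerSeries.X ^ (6 * M)}
  let f := Ideal.Quotient.mk I
  have hx : (f PowerSeries.X) ^ (6 * M) = 0 := by
    rw [← map_pow]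
    exact Ideal.Quotient.eq_zero_iff_mem.2 (Ideal.subset_span rfl)
  have h := W_eq_prod _ hx
  rw [prod_Q, W] at h
  simp only [← map_pow, ← map_sum] at h
  rw [Ideal.Quotient.mk_eq_mk_iff_sub_mem, Ideal.mem_span_singleton,
    PowerSeries.X_pow_dvd_iff] at h
  have h2 := h n hn
  simp only [map_sub, map_sum, PowerSeries.coeff_X_pow] at h2
  rw [Finset.sum_boole, Finset.sum_boole, sub_eq_zero] at h2
  have h3 := Nat.cast_injective h2
  simp only [eq_comm (a := n)] at h3
  exact h3.symm

/-- Partitions with distinct parts are the same as finite sets of positive integers. -/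
lemma card_part (n : ℕ) (p : Multiset ℕ → Prop) (T : Finset (Finset ℕ))
    [Fintype {r : n.Partition // r.parts.Nodup ∧ p r.parts}]
    (hT : ∀ s : Finset ℕ, s ∈ T ↔ (∀ i ∈ s, 0 < i) ∧ ∑ i ∈ s, i = n ∧ p s.val) :
    Fintype.card {r : n.Partition // r.parts.Nodup ∧ p r.parts} = T.card := by
  rw [← Fintype.card_coe]
  refine Fintype.card_congr
    { toFun := fun r => ⟨⟨r.1.parts, r.2.1⟩, (hT _).2 ⟨fun i hi => r.1.parts_pos hi, ?_, r.2.2⟩⟩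
      invFun := fun s => ⟨⟨s.1.val, fun {i} hi => ((hT _).1 s.2).1 i hi, ?_⟩, s.1.nodup,
        ((hT _).1 s.2).2.2⟩
      left_inv := fun r => rfl
      right_inv := fun s => rfl }
  · have := r.1.parts_sum
    rw [Finset.sum, Multiset.map_id']
    exact this
  · have := ((hT _).1 s.2).2.1
    rw [Finset.sum, Multiset.map_id'] at this
    exact this

end GollnitzProof


/-- Göllnitz's 1967 partition theorem: the number of partitions of `n` into
distinct parts `≡ 2, 4, 5 (mod 6)` equals the number of partitions of `n`
into parts `≠ 1, 3` which pairwise differ by at least `6`, where a difference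
of exactly `6` occurs only if the larger of the two parts is
`≡ 2, 4`, or `5 (mod 6)`. -/
theorem gollnitz_partition_theorem (n : ℕ) :
    Fintype.card {p : n.Partition //
        p.parts.Nodup ∧ ∀ x ∈ p.parts, x % 6 = 2 ∨ x % 6 = 4 ∨ x % 6 = 5}
    = Fintype.card {p : n.Partition //
        p.parts.Nodup ∧ (∀ x ∈ p.parts, x ≠ 1 ∧ x ≠ 3) ∧
        ∀ x ∈ p.parts, ∀ y ∈ p.parts, x < y →
          6 ≤ y - x ∧ (y - x = 6 → y % 6 = 2 ∨ y % 6 = 4 ∨ y % 6 = 5)} := by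
  classical
  rw [GollnitzProof.card_part n (fun m => ∀ x ∈ m, x % 6 = 2 ∨ x % 6 = 4 ∨ x % 6 = 5)
    ((((Finset.range (6 * (n + 1))).filter GollnitzProof.Q).powerset).filter
      (fun s => ∑ i ∈ s, i = n)) ?_,
    GollnitzProof.card_part n (fun m => (∀ x ∈ m, x ≠ 1 ∧ x ≠ 3) ∧
        ∀ x ∈ m, ∀ y ∈ m, x < y →
          6 ≤ y - x ∧ (y - x = 6 → y % 6 = 2 ∨ y % 6 = 4 ∨ y % 6 = 5))
    ((GollnitzProof.S (6 * (n + 1) + 5)).filter (fun s => ∑ i ∈ s, i = n)) ?_]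
  · exact GollnitzProof.count_eq n (n + 1) (by omega)
  · intro s
    rw [Finset.mem_filter, GollnitzProof.mem_S]
    simp only [Finset.mem_val]
    constructor
    · rintro ⟨⟨_, h1, h2⟩, hs⟩
      exact ⟨fun i hi => Nat.pos_of_ne_zero (h1 i hi).1, hs, fun i hi => (h1 i hi).2, h2⟩
    · rintro ⟨h0, hs, h1, h2⟩
      refine ⟨⟨fun i hi => ?_, fun i hi => ⟨(h0 i hi).ne', h1 i hi⟩, h2⟩, hs⟩
      have := Finset.single_le_sum (f := fun i => i) (fun j _ => Nat.zero_le j) hi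
      omega
  · intro s
    rw [Finset.mem_filter, Finset.mem_powerset]
    simp only [Finset.mem_val, Finset.subset_iff, Finset.mem_filter, Finset.mem_range]
    constructor
    · rintro ⟨h1, hs⟩
      refine ⟨fun i hi => ?_, hs, fun i hi => (h1 hi).2⟩
      have := (h1 hi).2
      unfold GollnitzProof.Q at this
      omega
    · rintro ⟨h0, hs, h1⟩
      refine ⟨fun i hi => ⟨?_, h1 i hi⟩, hs⟩
      have := Finset.single_le_sum (f := fun i => i) (fun j _ => Nat.zero_le j) hi
      omega
end
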